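/- arXiv:2302.06563 — 2 statements merged into one kernel-verified Lean document; each statement's English description precedes it below -/
import Mathlib

section
/- Let X₁, X₂, Y₁, Y₂ be binary words with w_H(X₁) = w_H(Y₁) = w₁ and w_H(X₂) = w_H(Y₂). Define Q := |v_{w₁+1}(X₁) − v_{w₁+1}(Y₁)| + |v_1(X₂) − v_1(Y₂)| − |(v_{w₁+1}(X₁) + v_1(X₂)) − (v_{w₁+1}(Y₁) + v_1(Y₂))|. Then Q ≥ 0 and d_id(X₁X₂, Y₁Y₂) = d_id(X₁,Y₁) + d_id(X₂,Y₂) − Q. -/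
/-!
The distance `dId` between words of equal weight is the `ℓ¹`-distance of their run-length
vectors (`dId_eq`). It is a lower bound because one step changes a single run length by one
(`ell1_zeroDel`) and `ell1` satisfies the triangle inequality on vectors of equal length; it is
attained by adjusting the runs greedily from left to right (`zeroChain_ell1`).

Concatenating two words glues their run-length vectors: the last entry of the first and the first
entry of the second are added into one entry (`runLengths_append`). Hence the `ℓ¹`-distance of the
concatenations differs from the sum of the two `ℓ¹`-distances only at the glued entry
(`ell1_glue`), where two absolute values are replaced by one; the difference is `Q`, which is
nonnegative by the triangle inequality in `ℤ`.
-/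

/-- `Y` is obtained from `X` by deleting one occurrence of the symbol `0`
(represented by `false`). -/
def ZeroDel (X Y : List Bool) : Prop :=
  ∃ A B : List Bool, X = A ++ false :: B ∧ Y = A ++ B

/-- One elementary step: deletion or insertion of a single `0`. -/
def ZeroStep (X Y : List Bool) : Prop := ZeroDel X Y ∨ ZeroDel Y X

/-- `ZeroChain k X Y` : `Y` is obtained from `X` by exactly `k` elementary steps. -/
def ZeroChain : ℕ → List Bool → List Bool → Prop
  | 0, X, Y => X = Y
  | k + 1, X, Y => ∃ Z, ZeroStep X Z ∧ ZeroChain k Z Y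

/-- The deletion/insertion-of-`0`'s distance `d_id`, valued in `ℕ∞`
(`⊤` when no finite sequence of steps transforms `X` into `Y`). -/
noncomputable def dId (X Y : List Bool) : ℕ∞ :=
  sInf {n : ℕ∞ | ∃ k : ℕ, n = k ∧ ZeroChain k X Y}

/-- The run-length map `V` : the list `(v₁, …, v_{w+1})` of lengths of the maximal
runs of `0`'s of a binary word, delimited by its `1`'s. -/
def runLengths : List Bool → List ℕ
  | [] => [0]
  | false :: r =>
    match runLengths r with
    | [] => [1]
    | v :: vs => (v + 1) :: vs
  | true :: r => 0 :: runLengths r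

/-- The `ℓ¹`-distance of two vectors of natural numbers, meant for vectors of equal length;
surplus entries are ignored. The truncated differences add up to `|a - b|`. -/
def ell1 : List ℕ → List ℕ → ℕ
  | a :: as, b :: bs => ((a - b) + (b - a)) + ell1 as bs
  | _, _ => 0

/-- Concatenation of two vectors in which the last entry of the first is merged with the first
entry of the second by addition. -/
def glue : List ℕ → List ℕ → List ℕ
  | [a], b :: bs => (a + b) :: bs
  | a :: a' :: as, bs => a :: glue (a' :: as) bs
  | as, _ => as

theorem runLengths_ne_nil (X : List Bool) : ∃ v vs, runLengths X = v :: vs := by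
  induction X with
  | nil => exact ⟨0, [], rfl⟩
  | cons b X ih =>
    obtain ⟨v, vs, h⟩ := ih
    cases b
    · exact ⟨v + 1, vs, by simp [runLengths, h]⟩
    · exact ⟨0, v :: vs, by simp [runLengths, h]⟩

theorem length_runLengths (X : List Bool) : (runLengths X).length = X.count true + 1 := by
  induction X with
  | nil => rfl
  | cons b X ih =>
    obtain ⟨v, vs, h⟩ := runLengths_ne_nil X
    cases b <;> simp_all [runLengths]

theorem runLengths_append (X Y : List Bool) :
    runLengths (X ++ Y) = glue (runLengths X) (runLengths Y) := by
  obtain ⟨u, us, hY⟩ := runLengths_ne_nil Y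
  induction X with
  | nil => simp [runLengths, hY, glue]
  | cons b X ih =>
    obtain ⟨v, vs, h⟩ := runLengths_ne_nil X
    rw [h, hY] at ih
    cases b
    · cases vs with
      | nil => simp [runLengths, h, hY, ih, glue]; omega
      | cons v' vs => simp [runLengths, h, hY, ih, glue]
    · simp [runLengths, h, hY, ih, glue]

theorem ell1_self (a : List ℕ) : ell1 a a = 0 := by
  induction a with
  | nil => rfl
  | cons x a ih => simp [ell1, ih]

theorem ell1_comm (a b : List ℕ) : ell1 a b = ell1 b a := by
  induction a generalizing b with
  | nil => cases b <;> rfl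
  | cons x a ih =>
    cases b with
    | nil => rfl
    | cons y b => simp only [ell1, ih b]; omega

theorem ell1_triangle (a b c : List ℕ) (h : a.length = b.length) :
    ell1 a c ≤ ell1 a b + ell1 b c := by
  induction a generalizing b c with
  | nil => simp [ell1]
  | cons x a ih =>
    cases b with
    | nil => simp at h
    | cons y b =>
      cases c with
      | nil => simp [ell1]
      | cons z c =>
        have := ih b c (by simpa using h)
        simp only [ell1]
        omega

/-- Gluing changes the `ℓ¹`-distance only through the merged entry. -/
theorem ell1_glue (a b c d : List ℕ) (ha : a ≠ []) (hc : c ≠ []) (hd : d ≠ [])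
    (hab : a.length = b.length) :
    (ell1 (glue a c) (glue b d) : ℤ) = ell1 a b + ell1 c d -
      (|(a.getLastD 0 : ℤ) - (b.getLastD 0 : ℤ)| + |(c.headD 0 : ℤ) - (d.headD 0 : ℤ)| -
        |((a.getLastD 0 : ℤ) + (c.headD 0 : ℤ)) - ((b.getLastD 0 : ℤ) + (d.headD 0 : ℤ))|) := by
  obtain ⟨u, us, rfl⟩ := List.exists_cons_of_ne_nil hc
  obtain ⟨t, ts, rfl⟩ := List.exists_cons_of_ne_nil hd
  induction a generalizing b with
  | nil => exact absurd rfl ha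
  | cons x a ih =>
    cases b with
    | nil => simp at hab
    | cons y b =>
      cases a with
      | nil =>
        cases b with
        | nil =>
          simp only [glue, ell1, List.getLastD_cons, List.getLastD_nil, List.headD_cons,
            abs_eq_max_neg]
          omega
        | cons y' b => simp at hab
      | cons x' a =>
        cases b with
        | nil => simp at hab
        | cons y' b =>
          have := ih (y' :: b) (by simp) (by simpa using hab)
          simp only [glue, List.getLastD_cons, List.headD_cons] at this ⊢
          rw [ell1, ell1.eq_1 x _ y]
          push_cast
          omega

theorem ell1_zeroDel {X Z : List Bool} (h : ZeroDel X Z) :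
    ell1 (runLengths X) (runLengths Z) = 1 := by
  obtain ⟨A, B, rfl, rfl⟩ := h
  induction A with
  | nil =>
    obtain ⟨v, vs, h⟩ := runLengths_ne_nil B
    simp [runLengths, h, ell1, ell1_self]
  | cons b A ih =>
    obtain ⟨v, vs, h⟩ := runLengths_ne_nil (A ++ false :: B)
    obtain ⟨u, us, h'⟩ := runLengths_ne_nil (A ++ B)
    cases b <;> simpa [runLengths, h, h', ell1] using ih

theorem ell1_zeroStep {X Z : List Bool} (h : ZeroStep X Z) :
    ell1 (runLengths X) (runLengths Z) = 1 := by
  rcases h with h | h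
  · exact ell1_zeroDel h
  · rw [ell1_comm]; exact ell1_zeroDel h

theorem ZeroStep.count_eq {X Z : List Bool} (h : ZeroStep X Z) :
    X.count true = Z.count true := by
  rcases h with ⟨A, B, rfl, rfl⟩ | ⟨A, B, rfl, rfl⟩ <;> simp

theorem ell1_le_of_zeroChain {k : ℕ} {X Y : List Bool} (h : ZeroChain k X Y) :
    ell1 (runLengths X) (runLengths Y) ≤ k := by
  induction k generalizing X with
  | zero => rw [show X = Y from h, ell1_self]
  | succ k ih =>
    obtain ⟨Z, hs, hc⟩ := h
    have h1 := ell1_triangle (runLengths X) (runLengths Z) (runLengths Y)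
      (by rw [length_runLengths, length_runLengths, hs.count_eq])
    have h2 := ell1_zeroStep hs
    have h3 := ih hc
    omega

theorem ZeroStep.cons (b : Bool) {X Y : List Bool} (h : ZeroStep X Y) :
    ZeroStep (b :: X) (b :: Y) := by
  rcases h with ⟨A, B, rfl, rfl⟩ | ⟨A, B, rfl, rfl⟩
  · exact Or.inl ⟨b :: A, B, rfl, rfl⟩
  · exact Or.inr ⟨b :: A, B, rfl, rfl⟩

theorem ZeroChain.cons (b : Bool) {k : ℕ} {X Y : List Bool} (h : ZeroChain k X Y) :
    ZeroChain k (b :: X) (b :: Y) := by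
  induction k generalizing X with
  | zero => exact congrArg (b :: ·) h
  | succ k ih =>
    obtain ⟨Z, hs, hc⟩ := h
    exact ⟨b :: Z, hs.cons b, ih hc⟩

/-- The `ℓ¹`-distance is attained: scanning both words from the left, common leading symbols are
kept, and a leading `0` present in only one of the words is deleted or inserted. -/
theorem zeroChain_ell1 : ∀ X Y : List Bool, X.count true = Y.count true →
    ZeroChain (ell1 (runLengths X) (runLengths Y)) X Y
  | [], [], _ => rfl
  | [], true :: Y, h => by simp at h
  | true :: X, [], h => by simp at h
  | true :: X, true :: Y, h => by
    have := (zeroChain_ell1 X Y (by simpa using h)).cons true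
    simpa [runLengths, ell1] using this
  | false :: X, false :: Y, h => by
    have := (zeroChain_ell1 X Y (by simpa using h)).cons false
    obtain ⟨v, vs, hX⟩ := runLengths_ne_nil X
    obtain ⟨u, us, hY⟩ := runLengths_ne_nil Y
    simpa [runLengths, ell1, hX, hY] using this
  | false :: X, [], h => by
    have := zeroChain_ell1 X [] (by simpa using h)
    obtain ⟨v, vs, hX⟩ := runLengths_ne_nil X
    have e : ell1 (runLengths (false :: X)) (runLengths []) =
        ell1 (runLengths X) (runLengths []) + 1 := by
      simp [runLengths, ell1, hX]
    rw [e]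
    exact ⟨X, Or.inl ⟨[], X, rfl, rfl⟩, this⟩
  | false :: X, true :: Y, h => by
    have := zeroChain_ell1 X (true :: Y) (by simpa using h)
    obtain ⟨v, vs, hX⟩ := runLengths_ne_nil X
    have e : ell1 (runLengths (false :: X)) (runLengths (true :: Y)) =
        ell1 (runLengths X) (runLengths (true :: Y)) + 1 := by
      simp [runLengths, ell1, hX]; omega
    rw [e]
    exact ⟨X, Or.inl ⟨[], X, rfl, rfl⟩, this⟩
  | [], false :: Y, h => by
    have := (zeroChain_ell1 [] Y (by simpa using h)).cons false
    obtain ⟨u, us, hY⟩ := runLengths_ne_nil Y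
    have e : ell1 (runLengths []) (runLengths (false :: Y)) =
        ell1 (runLengths []) (runLengths Y) + 1 := by
      simp [runLengths, ell1, hY]
    rw [e]
    exact ⟨[false], Or.inr ⟨[], [], rfl, rfl⟩, this⟩
  | true :: X, false :: Y, h => by
    have := (zeroChain_ell1 (true :: X) Y (by simpa using h)).cons false
    obtain ⟨u, us, hY⟩ := runLengths_ne_nil Y
    have e : ell1 (runLengths (true :: X)) (runLengths (false :: Y)) =
        ell1 (runLengths (true :: X)) (runLengths Y) + 1 := by
      simp [runLengths, ell1, hY]; omega
    rw [e]
    exact ⟨false :: true :: X, Or.inr ⟨[], true :: X, rfl, rfl⟩, this⟩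
termination_by X Y => X.length + Y.length

theorem dId_eq {X Y : List Bool} (h : X.count true = Y.count true) :
    dId X Y = (ell1 (runLengths X) (runLengths Y) : ℕ) := by
  apply le_antisymm
  · exact sInf_le ⟨_, rfl, zeroChain_ell1 X Y h⟩
  · apply le_sInf
    rintro n ⟨k, rfl, hk⟩
    exact_mod_cast ell1_le_of_zeroChain hk


/-- Concatenation (sub)additivity with explicit defect: if `w_H(X₁) = w_H(Y₁) = w₁`
and `w_H(X₂) = w_H(Y₂)`, then with
`Q = |v_{w₁+1}(X₁) - v_{w₁+1}(Y₁)| + |v₁(X₂) - v₁(Y₂)|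
      - |(v_{w₁+1}(X₁) + v₁(X₂)) - (v_{w₁+1}(Y₁) + v₁(Y₂))|`
one has `Q ≥ 0` and `d_id(X₁X₂, Y₁Y₂) = d_id(X₁,Y₁) + d_id(X₂,Y₂) - Q`.
(Here `v_{w₁+1}(X₁)` is the last run length of `X₁` and `v₁(X₂)` the first run
length of `X₂`.) -/
theorem dId_append_eq (X₁ X₂ Y₁ Y₂ : List Bool) (w₁ : ℕ)
    (hX₁ : X₁.count true = w₁) (hY₁ : Y₁.count true = w₁)
    (h₂ : X₂.count true = Y₂.count true) :
    0 ≤ (|((runLengths X₁).getLastD 0 : ℤ) - ((runLengths Y₁).getLastD 0 : ℤ)| +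
          |((runLengths X₂).headD 0 : ℤ) - ((runLengths Y₂).headD 0 : ℤ)| -
          |(((runLengths X₁).getLastD 0 : ℤ) + ((runLengths X₂).headD 0 : ℤ)) -
            (((runLengths Y₁).getLastD 0 : ℤ) + ((runLengths Y₂).headD 0 : ℤ))|) ∧
    dId (X₁ ++ X₂) (Y₁ ++ Y₂) =
      dId X₁ Y₁ + dId X₂ Y₂ -
        ((|((runLengths X₁).getLastD 0 : ℤ) - ((runLengths Y₁).getLastD 0 : ℤ)| +
          |((runLengths X₂).headD 0 : ℤ) - ((runLengths Y₂).headD 0 : ℤ)| -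
          |(((runLengths X₁).getLastD 0 : ℤ) + ((runLengths X₂).headD 0 : ℤ)) -
            (((runLengths Y₁).getLastD 0 : ℤ) + ((runLengths Y₂).headD 0 : ℤ))|).toNat
          : ℕ∞) := by
  have hne (X : List Bool) : runLengths X ≠ [] := by
    obtain ⟨v, vs, h⟩ := runLengths_ne_nil X
    simp [h]
  have key := ell1_glue (runLengths X₁) (runLengths Y₁) (runLengths X₂) (runLengths Y₂)
    (hne _) (hne _) (hne _) (by rw [length_runLengths, length_runLengths, hX₁, hY₁])
  rw [← runLengths_append, ← runLengths_append] at key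
  rw [dId_eq (hX₁.trans hY₁.symm), dId_eq h₂,
    dId_eq (X := X₁ ++ X₂) (by rw [List.count_append, List.count_append, hX₁, hY₁, h₂])]
  rw [add_sub_add_comm] at key ⊢
  have hQ := abs_add_le (((runLengths X₁).getLastD 0 : ℤ) - ((runLengths Y₁).getLastD 0 : ℤ))
    (((runLengths X₂).headD 0 : ℤ) - ((runLengths Y₂).headD 0 : ℤ))
  refine ⟨by omega, ?_⟩
  -- All terms are finite and `Q` is at most the sum, so the truncated subtraction is exact.
  rw [← Nat.cast_add, ← ENat.natCast_sub, Nat.cast_inj]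
  omega
end

section
/- For all integers n ≥ 1 and t ≥ 1, there exists a set C of binary words of length n, all of Hamming weight ⌈n/2⌉, such that |C| ≥ ⌈C(n, ⌈n/2⌉) / n^{t−1}⌉ and d_id(X,Y) ≥ 2t for all distinct X, Y ∈ C. Here C(n,w) is the binomial coefficient. -/
/-- The multiset which records, for every `0` of the word, the number of `1`s to its left. -/
def zeroPos : List Bool → Multiset ℕ
  | [] => 0
  | true :: L => (zeroPos L).map Nat.succ
  | false :: L => 0 ::ₘ zeroPos L

lemma card_zeroPos (X : List Bool) : (zeroPos X).card + X.count true = X.length := by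
  induction X with
  | nil => simp [zeroPos]
  | cons b L ih => cases b <;> simp [zeroPos] <;> omega

lemma le_of_mem_zeroPos (X : List Bool) : ∀ i ∈ zeroPos X, i ≤ X.count true := by
  induction X with
  | nil => simp [zeroPos]
  | cons b L ih =>
    cases b
    · simpa [zeroPos] using ih
    · simpa [zeroPos] using ih

lemma zeroPos_inj : ∀ X Y : List Bool, X.count true = Y.count true → zeroPos X = zeroPos Y → X = Y
  | [], [], _, _ => rfl
  | [], true :: L, h, _ => by simp at h
  | [], false :: L, _, h => by simp [zeroPos] at h
  | true :: L, [], h, _ => by simp at h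
  | false :: L, [], _, h => by simp [zeroPos] at h
  | true :: L, true :: L', h, h' => by
    rw [zeroPos_inj L L' (by simpa using h)
      (Multiset.map_injective Nat.succ_injective (by simpa [zeroPos] using h'))]
  | false :: L, false :: L', h, h' => by
    rw [zeroPos_inj L L' (by simpa using h) (by simpa [zeroPos] using h')]
  | true :: L, false :: L', _, h' => by
    have : 0 ∈ zeroPos (true :: L) := by rw [h']; simp [zeroPos]
    simp [zeroPos] at this
  | false :: L, true :: L', _, h' => by
    have : 0 ∈ zeroPos (true :: L') := by rw [← h']; simp [zeroPos]
    simp [zeroPos] at this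

lemma ZeroDel.exists_cons {X Y : List Bool} (h : ZeroDel X Y) :
    ∃ a, zeroPos X = a ::ₘ zeroPos Y := by
  obtain ⟨A, B, rfl, rfl⟩ := h
  induction A with
  | nil => exact ⟨0, rfl⟩
  | cons b A ih =>
    obtain ⟨a, ha⟩ := ih
    cases b
    · exact ⟨a, by simp [zeroPos, ha, Multiset.cons_swap]⟩
    · exact ⟨a + 1, by simp [zeroPos, ha]⟩

/-- Words joined by `k` steps have multisets that become equal to a common `U` after removing at
most `k` elements in total. -/
lemma ZeroChain.exists_common {k : ℕ} {X Y : List Bool} (h : ZeroChain k X Y) :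
    ∃ U E F, zeroPos X = U + E ∧ zeroPos Y = U + F ∧ E.card + F.card ≤ k := by
  induction k generalizing X with
  | zero =>
    cases h
    exact ⟨zeroPos Y, 0, 0, by simp, by simp, by simp⟩
  | succ k ih =>
    obtain ⟨Z, hXZ, hZY⟩ := h
    obtain ⟨U, E, F, hZ, hY, hk⟩ := ih hZY
    rcases hXZ with h | h
    · obtain ⟨a, ha⟩ := h.exists_cons
      exact ⟨U, a ::ₘ E, F, by simp [ha, hZ], hY, by simp; omega⟩
    · obtain ⟨a, ha⟩ := h.exists_cons
      have hmem : a ∈ U + E := by rw [← hZ, ha]; simp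
      rw [hZ] at ha
      rcases Multiset.mem_add.1 hmem with hU | hE
      · obtain ⟨U', rfl⟩ := Multiset.exists_cons_of_mem hU
        refine ⟨U', E, a ::ₘ F, ?_, by simp [hY], by simp; omega⟩
        rw [Multiset.cons_add, Multiset.cons_inj_right] at ha
        exact ha.symm
      · obtain ⟨E', rfl⟩ := Multiset.exists_cons_of_mem hE
        refine ⟨U, E', F, ?_, hY, by simp at hk; omega⟩
        rw [Multiset.add_cons, Multiset.cons_inj_right] at ha
        exact ha.symm

open Polynomial in
/-- The monic polynomial over `ZMod p` whose roots are the residues of the given multiset. -/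
noncomputable def rootPoly (p : ℕ) (M : Multiset ℕ) : (ZMod p)[X] :=
  ((M.map (Nat.cast : ℕ → ZMod p)).map fun a => X - C a).prod

/-- The polynomial `P_X` attached to a word `X`. -/
noncomputable def zeroPoly (p : ℕ) (X : List Bool) : Polynomial (ZMod p) :=
  rootPoly p (zeroPos X)

section rootPoly

variable (p : ℕ) [Fact p.Prime]

lemma rootPoly_monic (M : Multiset ℕ) : (rootPoly p M).Monic :=
  Polynomial.monic_multiset_prod_of_monic _ _ fun a _ => Polynomial.monic_X_sub_C a

lemma natDegree_rootPoly (M : Multiset ℕ) : (rootPoly p M).natDegree = M.card := by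
  rw [rootPoly, Polynomial.natDegree_multiset_prod_X_sub_C_eq_card, Multiset.card_map]

lemma rootPoly_add (M M' : Multiset ℕ) :
    rootPoly p (M + M') = rootPoly p M * rootPoly p M' := by
  simp [rootPoly]

lemma rootPoly_inj {M M' : Multiset ℕ} (hM : ∀ i ∈ M, i < p) (hM' : ∀ i ∈ M', i < p)
    (h : rootPoly p M = rootPoly p M') : M = M' := by
  have key : ∀ N : Multiset ℕ, (∀ i ∈ N, i < p) → (rootPoly p N).roots.map ZMod.val = N := by
    intro N hN
    rw [rootPoly, Polynomial.roots_multiset_prod_X_sub_C, Multiset.map_map]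
    conv_rhs => rw [← Multiset.map_id N]
    exact Multiset.map_congr rfl fun i hi => ZMod.val_cast_of_lt (hN i hi)
  rw [← key M hM, ← key M' hM', h]

/-- Two monic polynomials of degree `N` which agree in the `s` coefficients after the leading one,
and which have a common factor of degree at least `N - s`, are equal. For `i ≥ N` the index
`N - 1 - i` truncates to `0`, which only repeats the condition on the constant coefficient. -/
lemma rootPoly_eq_of_coeff {U E F : Multiset ℕ} {N s : ℕ} (hE : (U + E).card = N)
    (hF : (U + F).card = N) (hs : E.card ≤ s)
    (hc : ∀ i < s, (rootPoly p (U + E)).coeff (N - 1 - i) =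
      (rootPoly p (U + F)).coeff (N - 1 - i)) :
    rootPoly p (U + E) = rootPoly p (U + F) := by
  rw [← sub_eq_zero]
  refine Polynomial.eq_zero_of_dvd_of_degree_lt (p := rootPoly p U) ?_ ?_
  · rw [rootPoly_add, rootPoly_add, ← mul_sub]
    exact dvd_mul_right _ _
  · rw [Polynomial.degree_eq_natDegree (rootPoly_monic p U).ne_zero, natDegree_rootPoly,
      Polynomial.degree_lt_iff_coeff_zero]
    intro j hj
    rw [Polynomial.coeff_sub, sub_eq_zero]
    rw [Multiset.card_add] at hE
    rcases lt_trichotomy j N with h | h | h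
    · have := hc (N - 1 - j) (by omega)
      rwa [show N - 1 - (N - 1 - j) = j by omega] at this
    · have h1 := (rootPoly_monic p (U + E)).coeff_natDegree
      have h2 := (rootPoly_monic p (U + F)).coeff_natDegree
      rw [natDegree_rootPoly] at h1 h2
      rw [hF] at h2
      rw [Multiset.card_add, hE] at h1
      rw [h, h1, h2]
    · rw [Polynomial.coeff_eq_zero_of_natDegree_lt, Polynomial.coeff_eq_zero_of_natDegree_lt]
      · rw [natDegree_rootPoly, hF]; exact h
      · rw [natDegree_rootPoly, Multiset.card_add, hE]; exact h

end rootPoly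

/-- The words of length `n` and weight `w` are `n.choose w` in number (Pascal's recursion). -/
lemma exists_words (n w : ℕ) : ∃ S : Finset (List Bool),
    (∀ X ∈ S, X.length = n ∧ X.count true = w) ∧ S.card = n.choose w := by
  induction n generalizing w with
  | zero =>
    cases w with
    | zero => exact ⟨{[]}, by simp, by simp⟩
    | succ w => exact ⟨∅, by simp, by simp⟩
  | succ n ih =>
    have inj : ∀ b : Bool, Function.Injective (List.cons b) := fun b => List.cons_injective
    cases w with
    | zero =>
      obtain ⟨S, hS, hc⟩ := ih 0
      refine ⟨S.map ⟨_, inj false⟩, ?_, by simpa using hc⟩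
      intro X hX
      obtain ⟨L, hL, rfl⟩ := Finset.mem_map.1 hX
      simpa using hS L hL
    | succ w =>
      obtain ⟨S, hS, hc⟩ := ih w
      obtain ⟨T, hT, hd⟩ := ih (w + 1)
      refine ⟨S.map ⟨_, inj true⟩ ∪ T.map ⟨_, inj false⟩, ?_, ?_⟩
      · intro X hX
        rcases Finset.mem_union.1 hX with hX | hX
        · obtain ⟨L, hL, rfl⟩ := Finset.mem_map.1 hX
          simpa using hS L hL
        · obtain ⟨L, hL, rfl⟩ := Finset.mem_map.1 hX
          simpa using hT L hL
      · rw [Finset.card_union_of_disjoint, Finset.card_map, Finset.card_map, hc, hd,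
          Nat.choose_succ_succ]
        rw [Finset.disjoint_left]
        intro X hX hX'
        obtain ⟨L, _, rfl⟩ := Finset.mem_map.1 hX
        obtain ⟨L', _, h⟩ := Finset.mem_map.1 hX'
        simp at h

lemma exists_prime_between (n : ℕ) (hn : 2 ≤ n) : ∃ p, p.Prime ∧ (n + 1) / 2 < p ∧ p ≤ n := by
  obtain ⟨p, hp, h1, h2⟩ := Nat.exists_prime_lt_and_le_two_mul ((n + 1) / 2) (by omega)
  refine ⟨p, hp, h1, ?_⟩
  by_contra hlt
  -- Only `p = n + 1` with `n` odd remains; then `p` is an even prime, forcing `n = 1`.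
  have hpe : p = 2 * ((n + 1) / 2) := by omega
  have : p = 2 := ((Nat.prime_dvd_prime_iff_eq Nat.prime_two hp).1 ⟨_, hpe⟩).symm
  omega

/-- Lower bound for balanced `t`-Sy0EC codes: for all `n ≥ 1` and `t ≥ 1` there is a
set `C` of binary words of length `n` and Hamming weight `⌈n/2⌉` with
`|C| ≥ ⌈C(n, ⌈n/2⌉) / n^{t-1}⌉` whose distinct elements are at pairwise
`d_id`-distance `≥ 2t`. -/
theorem exists_balanced_code (n t : ℕ) (hn : 1 ≤ n) (ht : 1 ≤ t) :
    ∃ C : Finset (List Bool),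
      (∀ X ∈ C, X.length = n ∧ X.count true = (n + 1) / 2) ∧
      (∀ X ∈ C, ∀ Y ∈ C, X ≠ Y → ((2 * t : ℕ) : ℕ∞) ≤ dId X Y) ∧
      n.choose ((n + 1) / 2) ⌈/⌉ n ^ (t - 1) ≤ C.card := by
  rcases hn.eq_or_lt with rfl | hn2
  -- For `n = 1` no prime fits, but there is only one balanced word.
  · refine ⟨{[true]}, by simp, by simp, ?_⟩
    rw [ceilDiv_le_iff_le_mul (by simp)]
    simp
  obtain ⟨p, hp, hwp, hpn⟩ := exists_prime_between n hn2
  have : Fact p.Prime := ⟨hp⟩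
  obtain ⟨S, hS, hcard⟩ := exists_words n ((n + 1) / 2)
  set w := (n + 1) / 2
  let f : List Bool → (Fin (t - 1) → ZMod p) := fun X i => (zeroPoly p X).coeff (n - w - 1 - i)
  have hq : (Finset.univ : Finset (Fin (t - 1) → ZMod p)).card = p ^ (t - 1) := by
    simp [ZMod.card]
  have hp0 : (0 : ℚ) < (p : ℚ) ^ (t - 1) := by
    have : (0 : ℚ) < p := by exact_mod_cast hp.pos
    positivity
  obtain ⟨y, -, hy⟩ := Finset.exists_le_card_fiber_of_nsmul_le_card_of_maps_to
    (s := S) (t := Finset.univ) (f := f) (b := (S.card : ℚ) / (p : ℚ) ^ (t - 1))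
    (fun _ _ => Finset.mem_univ _) Finset.univ_nonempty (by
      rw [hq, nsmul_eq_mul]
      push_cast
      rw [mul_div_cancel₀ _ hp0.ne'])
  refine ⟨S.filter (fun X => f X = y), fun X hX => hS X (Finset.mem_filter.1 hX).1, ?_, ?_⟩
  · intro X hX Y hY hne
    obtain ⟨hXS, hXy⟩ := Finset.mem_filter.1 hX
    obtain ⟨hYS, hYy⟩ := Finset.mem_filter.1 hY
    obtain ⟨hXl, hXw⟩ := hS X hXS
    obtain ⟨hYl, hYw⟩ := hS Y hYS
    refine le_sInf ?_
    rintro _ ⟨k, rfl, hk⟩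
    rw [Nat.cast_le]
    by_contra hlt
    apply hne
    obtain ⟨U, E, F, hE, hF, hEF⟩ := hk.exists_common
    have cX := card_zeroPos X
    have cY := card_zeroPos Y
    refine zeroPos_inj X Y (hXw.trans hYw.symm) (rootPoly_inj p ?_ ?_ ?_)
    · intro i hi
      have := le_of_mem_zeroPos X i hi
      omega
    · intro i hi
      have := le_of_mem_zeroPos Y i hi
      omega
    · have hc : ∀ i < t - 1, (rootPoly p (zeroPos X)).coeff (n - w - 1 - i) =
          (rootPoly p (zeroPos Y)).coeff (n - w - 1 - i) := fun i hi =>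
        congrFun (hXy.trans hYy.symm) ⟨i, hi⟩
      rw [hE] at cX
      rw [hF] at cY
      rw [hE, hF] at hc ⊢
      have hcX : (U + E).card = n - w := by omega
      have hcY : (U + F).card = n - w := by omega
      refine rootPoly_eq_of_coeff p hcX hcY ?_ hc
      rw [Multiset.card_add] at hcX hcY
      omega
  · rw [ceilDiv_le_iff_le_mul (by positivity), ← hcard]
    rw [div_le_iff₀ hp0] at hy
    have h1 : S.card ≤ (S.filter (fun X => f X = y)).card * p ^ (t - 1) := by exact_mod_cast hy
    calc S.card ≤ (S.filter (fun X => f X = y)).card * p ^ (t - 1) := h1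
      _ ≤ (S.filter (fun X => f X = y)).card * n ^ (t - 1) := by gcongr
      _ = _ := by ring
end
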